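/- arXiv:2310.07838 — 4 statements merged into one kernel-verified Lean document; each statement's English description precedes it below -/
import Mathlib

section
/- Let S and A be nonempty finite sets, ρ ∈ Δ(S), π* ∈ Δ(A|S), and let D be n i.i.d. samples from ρ×π*. Let π̂_MLE ∈ Δ(A|S) be any conditional distribution with π̂_MLE(a|s) = N((s,a),D)/N(s,D) whenever N(s,D) > 0. Then the expected risk satisfies E[ TV(π̂_MLE ‖ π* | ρ) ] ≤ √( |S||A| / (2n) ) + √( |S| / n ). -/
open Finset

/-- `p` is a probability distribution on the finite set `A`. -/
def IsDist {A : Type} [Fintype A] (p : A → ℝ) : Prop :=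
  (∀ a, 0 ≤ p a) ∧ ∑ a, p a = 1

/-- `π` is a conditional probability distribution in `Δ(A|S)`. -/
def IsCondDist {S A : Type} [Fintype A] (π : S → A → ℝ) : Prop :=
  ∀ s, IsDist (π s)

/-- Conditional total variation `TV(π ‖ π' | ρ)`. -/
noncomputable def condTV {S A : Type} [Fintype S] [Fintype A]
    (ρ : S → ℝ) (π π' : S → A → ℝ) : ℝ :=
  ∑ s, ρ s * ((1 / 2) * ∑ a, |π s a - π' s a|)

/-- Probability of the dataset `D` under `n` i.i.d. samples from `ρ × π`. -/
noncomputable def wt {S A : Type} {n : ℕ} (ρ : S → ℝ) (π : S → A → ℝ)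
    (D : Fin n → S × A) : ℝ :=
  ∏ i, ρ (D i).1 * π (D i).1 (D i).2

/-- `N((s,a), D)`: number of occurrences of the pair `(s,a)` in the dataset `D`. -/
def cntSA {S A : Type} [DecidableEq S] [DecidableEq A] {n : ℕ}
    (D : Fin n → S × A) (s : S) (a : A) : ℕ :=
  (univ.filter fun i => D i = (s, a)).card

/-- `N(s, D)`: number of occurrences of the input `s` in the dataset `D`. -/
def cntS {S A : Type} [DecidableEq S] {n : ℕ} (D : Fin n → S × A) (s : S) : ℕ :=
  (univ.filter fun i => (D i).1 = s).card

/-!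
Replacing `ρ(s)` by the empirical frequency `N(s)/n` costs at most `∑ₛ |ρ(s) - N(s)/n|`, since every
total variation is at most one. After the replacement the denominator of the maximum likelihood
estimator cancels: `N(s) (π̂(a|s) - π*(a|s)) = N(s,a) - N(s) π*(a|s)`, for unvisited `s` too. Both
error vectors, `N(s) - n ρ(s)` and `N(s,a) - N(s) π*(a|s)`, are sums of `n` i.i.d. centred vectors
whose coordinate variances add up to at most one, so Cauchy–Schwarz bounds their expected `ℓ¹` norms
by the square root of `n` times the dimension.
-/

section IndependentSums

variable {ι R : Type*} [Fintype ι] [DecidableEq ι] {κ : ι → Type*} [∀ i, Fintype (κ i)]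
  [CommSemiring R] {p : ∀ i, κ i → R}

lemma sum_prod_mul_prod (hp : ∀ i, ∑ b, p i b = 1) (f : ∀ i, κ i → R) (t : Finset ι) :
    ∑ x : ∀ i, κ i, (∏ i, p i (x i)) * ∏ i ∈ t, f i (x i) = ∏ i ∈ t, ∑ b, p i b * f i b :=
  calc
    _ = ∑ x : ∀ i, κ i, ∏ i, p i (x i) * (if i ∈ t then f i (x i) else 1) := by
      simp only [prod_mul_distrib, prod_ite_mem, univ_inter]
    _ = ∏ i, ∑ b, p i b * (if i ∈ t then f i b else 1) := by
      rw [prod_univ_sum, Fintype.piFinset_univ]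
    _ = ∏ i, if i ∈ t then ∑ b, p i b * f i b else 1 :=
      prod_congr rfl fun i _ => by split_ifs <;> simp [hp]
    _ = ∏ i ∈ t, ∑ b, p i b * f i b := by rw [prod_ite_mem, univ_inter]

lemma sum_prod_mul_mul_eq_ite (hp : ∀ i, ∑ b, p i b = 1) {f : ∀ i, κ i → R}
    (hf : ∀ i, ∑ b, p i b * f i b = 0) (i j : ι) :
    ∑ x : ∀ i, κ i, (∏ k, p k (x k)) * (f i (x i) * f j (x j)) =
      if i = j then ∑ b, p i b * f i b ^ 2 else 0 := by
  split_ifs with hij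
  · subst hij
    simpa only [sq, prod_singleton] using sum_prod_mul_prod hp (fun k b => f k b * f k b) {i}
  · simpa [prod_pair hij, hf] using sum_prod_mul_prod hp f {i, j}

lemma sum_prod_mul_sum_sq_of_centered (hp : ∀ i, ∑ b, p i b = 1) {f : ∀ i, κ i → R}
    (hf : ∀ i, ∑ b, p i b * f i b = 0) :
    ∑ x : ∀ i, κ i, (∏ i, p i (x i)) * (∑ i, f i (x i)) ^ 2 = ∑ i, ∑ b, p i b * f i b ^ 2 :=
  calc
    _ = ∑ i, ∑ j, ∑ x : ∀ i, κ i, (∏ k, p k (x k)) * (f i (x i) * f j (x j)) := by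
      simp only [sq, sum_mul_sum]
      simp only [mul_sum]
      rw [sum_comm]
      exact sum_congr rfl fun _ _ => sum_comm
    _ = ∑ i, ∑ b, p i b * f i b ^ 2 := by simp [sum_prod_mul_mul_eq_ite hp hf]

end IndependentSums

section CenteredIndicators

variable {A R : Type*} [Fintype A] [DecidableEq A]

lemma sum_mul_ite_sub_eq_zero [CommRing R] {p : A → R} (hp : ∑ a, p a = 1) (a : A) :
    ∑ b, p b * ((if b = a then 1 else 0) - p a) = 0 := by
  simp [mul_sub, ← sum_mul, hp]

lemma sum_mul_sum_ite_sub_sq [CommRing R] {p : A → R} (hp : ∑ a, p a = 1) :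
    ∑ b, p b * ∑ a, ((if b = a then 1 else 0) - p a) ^ 2 = 1 - ∑ a, p a ^ 2 := by
  have h_expand (b : A) :
      ∑ a, ((if b = a then 1 else 0) - p a) ^ 2 = 1 - 2 * p b + ∑ a, p a ^ 2 := by
    simp [sub_sq, sum_add_distrib, sum_sub_distrib]
  simp only [h_expand, mul_add, mul_sub, sum_add_distrib, sum_sub_distrib, ← sum_mul, hp,
    mul_left_comm _ (2 : R), ← mul_sum, ← sq]
  ring

lemma sum_mul_sum_ite_sub_sq_le_one {p : A → ℝ} (hp : ∑ a, p a = 1) :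
    ∑ b, p b * ∑ a, ((if b = a then 1 else 0) - p a) ^ 2 ≤ 1 :=
  (sum_mul_sum_ite_sub_sq hp).trans_le <| sub_le_self 1 <| sum_nonneg fun a _ => sq_nonneg (p a)

end CenteredIndicators

namespace IsDist

lemma half_sum_abs_sub_le_one {A : Type} [Fintype A] {p q : A → ℝ} (hp : IsDist p)
    (hq : IsDist q) : 1 / 2 * ∑ a, |p a - q a| ≤ 1 := by
  have h_sum : ∑ a, |p a - q a| ≤ ∑ a, (p a + q a) := sum_le_sum fun a _ => by
    simpa [abs_of_nonneg (hp.1 a), abs_of_nonneg (hq.1 a)] using abs_sub (p a) (q a)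
  rw [sum_add_distrib, hp.2, hq.2] at h_sum
  linarith

lemma pi {ι : Type} [Fintype ι] [DecidableEq ι] {κ : ι → Type} [∀ i, Fintype (κ i)]
    {p : ∀ i, κ i → ℝ} (hp : ∀ i, IsDist (p i)) :
    IsDist fun x : ∀ i, κ i => ∏ i, p i (x i) :=
  ⟨fun x => prod_nonneg fun i _ => (hp i).1 (x i), by
    simpa using sum_prod_mul_prod (fun i => (hp i).2) (fun _ _ => 1) ∅⟩

lemma sum_mul_sum_abs_le_sqrt {Ω : Type} {K : Type*} [Fintype Ω] [Fintype K] {w : Ω → ℝ}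
    (hw : IsDist w) (Y : K → Ω → ℝ) :
    ∑ ω, w ω * ∑ k, |Y k ω| ≤ √(Fintype.card K * ∑ k, ∑ ω, w ω * Y k ω ^ 2) := by
  apply Real.le_sqrt_of_sq_le
  have h_cauchy := sum_sq_le_sum_mul_sum_of_sq_le_mul (univ : Finset (K × Ω))
    (r := fun x => w x.2 * |Y x.1 x.2|) (f := fun x => w x.2)
    (g := fun x => w x.2 * Y x.1 x.2 ^ 2) (fun x _ => hw.1 x.2)
    (fun x _ => mul_nonneg (hw.1 x.2) (sq_nonneg _))
    (fun x _ => by rw [mul_pow, sq_abs, sq, mul_assoc])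
  simpa [Fintype.sum_prod_type, hw.2, mul_sum, sum_comm (s := (univ : Finset Ω))] using h_cauchy

lemma sum_prod_mul_sum_abs_sum_le_sqrt {ι : Type} {K : Type*} [Fintype ι] [DecidableEq ι]
    [Fintype K] {κ : ι → Type} [∀ i, Fintype (κ i)] {p : ∀ i, κ i → ℝ} (hp : ∀ i, IsDist (p i))
    {f : K → ∀ i, κ i → ℝ} (hf : ∀ k i, ∑ b, p i b * f k i b = 0) :
    ∑ x : ∀ i, κ i, (∏ i, p i (x i)) * ∑ k, |∑ i, f k i (x i)| ≤
      √(Fintype.card K * ∑ i, ∑ b, p i b * ∑ k, f k i b ^ 2) := by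
  have h_variance : ∑ k, ∑ x : ∀ i, κ i, (∏ i, p i (x i)) * (∑ i, f k i (x i)) ^ 2 =
      ∑ i, ∑ b, p i b * ∑ k, f k i b ^ 2 := by
    simp only [fun k => sum_prod_mul_sum_sq_of_centered (fun i => (hp i).2) (hf k), mul_sum]
    rw [sum_comm]
    exact sum_congr rfl fun _ _ => sum_comm
  exact h_variance ▸ (pi hp).sum_mul_sum_abs_le_sqrt fun k x => ∑ i, f k i (x i)

end IsDist

lemma cntSA_le_cntS {S A : Type} [DecidableEq S] [DecidableEq A] {n : ℕ} (D : Fin n → S × A)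
    (s : S) (a : A) : cntSA D s a ≤ cntS D s :=
  card_le_card <| monotone_filter_right _ fun _ _ h => congrArg Prod.fst h

section Samples

variable {S A : Type} [Fintype S] [Fintype A]

lemma sum_joint_mul (ρ : S → ℝ) (π : S → A → ℝ) (F : S × A → ℝ) :
    ∑ x : S × A, ρ x.1 * π x.1 x.2 * F x = ∑ s, ρ s * ∑ a, π s a * F (s, a) := by
  simp only [Fintype.sum_prod_type, mul_sum, mul_assoc]

variable {ρ : S → ℝ} {π : S → A → ℝ}

lemma IsDist.joint (hρ : IsDist ρ) (hπ : IsCondDist π) :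
    IsDist fun x : S × A => ρ x.1 * π x.1 x.2 :=
  ⟨fun x => mul_nonneg (hρ.1 x.1) ((hπ x.1).1 x.2), by
    simpa [(hπ _).2, hρ.2] using sum_joint_mul ρ π 1⟩

lemma sum_wt_mul_sum_abs_sum_le_sqrt {K : Type*} [Fintype K] (hρ : IsDist ρ)
    (hπ : IsCondDist π) (n : ℕ) {f : K → S × A → ℝ}
    (hf : ∀ k, ∑ s, ρ s * ∑ a, π s a * f k (s, a) = 0)
    {v : ℝ} (hf_sq : ∑ s, ρ s * ∑ a, π s a * ∑ k, f k (s, a) ^ 2 ≤ v) :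
    ∑ D : Fin n → S × A, wt ρ π D * ∑ k, |∑ i, f k (D i)| ≤ √(Fintype.card K * (n * v)) := by
  refine (IsDist.sum_prod_mul_sum_abs_sum_le_sqrt (fun _ : Fin n => hρ.joint hπ)
    (f := fun k _ => f k) fun k _ => (sum_joint_mul ρ π (f k)).trans (hf k)).trans ?_
  simp only [sum_joint_mul ρ π fun x => ∑ k, f k x ^ 2, sum_const, card_univ, Fintype.card_fin,
    nsmul_eq_mul]
  gcongr

variable [DecidableEq S]

lemma sum_wt_mul_sum_abs_cntS_sub_le_sqrt (hρ : IsDist ρ) (hπ : IsCondDist π) (n : ℕ) :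
    ∑ D : Fin n → S × A, wt ρ π D * ∑ s, |(cntS D s : ℝ) - n * ρ s| ≤
      √(Fintype.card S * n) := by
  let f (s s' : S) : ℝ := (if s' = s then 1 else 0) - ρ s
  have h_sum (D : Fin n → S × A) (s : S) : ∑ i, f s (D i).1 = (cntS D s : ℝ) - n * ρ s := by
    simp [f, cntS]
  have h_marginal (s : S) (c : ℝ) : ∑ a, π s a * c = c := by rw [← sum_mul, (hπ s).2, one_mul]
  simpa only [h_sum, mul_one] using
    sum_wt_mul_sum_abs_sum_le_sqrt hρ hπ n (f := fun s x => f s x.1) (v := 1)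
      (fun s => by simpa only [h_marginal] using sum_mul_ite_sub_eq_zero hρ.2 s)
      (by simpa only [h_marginal] using sum_mul_sum_ite_sub_sq_le_one hρ.2)

variable [DecidableEq A]

lemma sum_wt_mul_sum_abs_cntSA_sub_le_sqrt (hρ : IsDist ρ) (hπ : IsCondDist π) (n : ℕ) :
    ∑ D : Fin n → S × A, wt ρ π D * ∑ s, ∑ a, |(cntSA D s a : ℝ) - cntS D s * π s a| ≤
      √(Fintype.card S * Fintype.card A * n) := by
  let f (k x : S × A) : ℝ := if x.1 = k.1 then (if x.2 = k.2 then 1 else 0) - π k.1 k.2 else 0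
  have h_sum (D : Fin n → S × A) (s : S) (a : A) :
      ∑ i, f (s, a) (D i) = (cntSA D s a : ℝ) - cntS D s * π s a := by
    simp [f, cntSA, cntS, Prod.ext_iff, ← sum_filter, filter_filter]
  have h_centered (k : S × A) (s : S) : ∑ a, π s a * f k (s, a) = 0 := by
    by_cases h : s = k.1
    · subst h
      simpa [f] using sum_mul_ite_sub_eq_zero (hπ k.1).2 k.2
    · simp [f, h]
  have h_sq (s : S) : ∑ a, π s a * ∑ k, f k (s, a) ^ 2 ≤ 1 := by
    simpa [f, Fintype.sum_prod_type, ite_pow, sum_ite_irrel] using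
      sum_mul_sum_ite_sub_sq_le_one (hπ s).2
  simpa only [Fintype.sum_prod_type, h_sum, Fintype.card_prod, Nat.cast_mul, mul_one] using
    sum_wt_mul_sum_abs_sum_le_sqrt hρ hπ n (f := f) (fun k => by simp [h_centered])
      ((sum_le_sum fun s _ => mul_le_of_le_one_right (hρ.1 s) (h_sq s)).trans_eq hρ.2)

lemma mul_condTV_le {n : ℕ} {D : Fin n → S × A} {π' : S → A → ℝ} (hπ : IsCondDist π)
    (hπ' : IsCondDist π') (h_mle : ∀ s a, cntS D s * π s a = cntSA D s a) :
    n * condTV ρ π π' ≤ ∑ s, |(cntS D s : ℝ) - n * ρ s| +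
      1 / 2 * ∑ s, ∑ a, |(cntSA D s a : ℝ) - cntS D s * π' s a| := by
  rw [condTV, mul_sum, mul_sum, ← sum_add_distrib]
  refine sum_le_sum fun s _ => ?_
  have h_cancel : (cntS D s : ℝ) * (1 / 2 * ∑ a, |π s a - π' s a|) =
      1 / 2 * ∑ a, |(cntSA D s a : ℝ) - cntS D s * π' s a| := by
    simp only [← h_mle, ← mul_sub, abs_mul, Nat.abs_cast, ← mul_sum]
    ring
  calc
    _ = (n * ρ s - cntS D s) * (1 / 2 * ∑ a, |π s a - π' s a|) +
        cntS D s * (1 / 2 * ∑ a, |π s a - π' s a|) := by ring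
    _ ≤ |(cntS D s : ℝ) - n * ρ s| * 1 + cntS D s * (1 / 2 * ∑ a, |π s a - π' s a|) := by
      gcongr
      · exact abs_sub_comm (n * ρ s) _ ▸ le_abs_self _
      · exact (hπ s).half_sum_abs_sub_le_one (hπ' s)
    _ = _ := by rw [mul_one, h_cancel]

lemma mul_sum_wt_mul_condTV_le_sqrt {n : ℕ} (hρ : IsDist ρ) (hπ : IsCondDist π)
    {est : (Fin n → S × A) → S → A → ℝ} (h_est : ∀ D, IsCondDist (est D))
    (h_mle : ∀ D s a, cntS D s * est D s a = cntSA D s a) :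
    n * ∑ D, wt ρ π D * condTV ρ (est D) π ≤
      √(Fintype.card S * n) + 1 / 2 * √(Fintype.card S * Fintype.card A * n) :=
  calc
    _ = ∑ D, wt ρ π D * (n * condTV ρ (est D) π) := by simp only [mul_sum, mul_left_comm]
    _ ≤ ∑ D, wt ρ π D * (∑ s, |(cntS D s : ℝ) - n * ρ s| +
        1 / 2 * ∑ s, ∑ a, |(cntSA D s a : ℝ) - cntS D s * π s a|) :=
      sum_le_sum fun D _ => mul_le_mul_of_nonneg_left (mul_condTV_le (h_est D) hπ (h_mle D))
        ((IsDist.pi fun _ => hρ.joint hπ).1 D)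
    _ = ∑ D : Fin n → S × A, wt ρ π D * ∑ s, |(cntS D s : ℝ) - n * ρ s| +
        1 / 2 * ∑ D : Fin n → S × A,
          wt ρ π D * ∑ s, ∑ a, |(cntSA D s a : ℝ) - cntS D s * π s a| := by
      simp only [mul_add, sum_add_distrib, mul_left_comm _ (1 / 2 : ℝ)]
      simp only [← mul_sum]
    _ ≤ _ := by
      gcongr
      · exact sum_wt_mul_sum_abs_cntS_sub_le_sqrt hρ hπ n
      · exact sum_wt_mul_sum_abs_cntSA_sub_le_sqrt hρ hπ n

lemma sum_wt_mul_condTV_le_sqrt {n : ℕ} (hn : 0 < n) (hρ : IsDist ρ) (hπ : IsCondDist π)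
    {est : (Fin n → S × A) → S → A → ℝ} (h_est : ∀ D, IsCondDist (est D))
    (h_mle : ∀ D s a, cntS D s * est D s a = cntSA D s a) :
    ∑ D, wt ρ π D * condTV ρ (est D) π ≤
      √(Fintype.card S * Fintype.card A / (4 * n)) + √(Fintype.card S / n) := by
  have hn' : (0 : ℝ) < n := by exact_mod_cast hn
  have h_scale {r : ℝ} (hr : 0 ≤ r) (x : ℝ) : √(r ^ 2 * x) = r * √x := by
    rw [Real.sqrt_mul (sq_nonneg r), Real.sqrt_sq hr]
  have h_S : √(Fintype.card S * n) = n * √(Fintype.card S / n) := by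
    rw [← h_scale hn'.le]
    congr 1
    field_simp
  have h_SA : 1 / 2 * √(Fintype.card S * Fintype.card A * n) =
      n * √(Fintype.card S * Fintype.card A / (4 * n)) := by
    rw [← h_scale hn'.le, ← h_scale (by norm_num)]
    congr 1
    field_simp
    ring
  have h_risk := mul_sum_wt_mul_condTV_le_sqrt hρ hπ h_est h_mle
  rwa [h_S, h_SA, ← mul_add, mul_le_mul_iff_right₀ hn', add_comm] at h_risk

end Samples

/-- worst-case expected-risk upper bound for the MLE:
`E[TV(π̂_MLE ‖ π* | ρ)] ≤ √(|S||A|/(2n)) + √(|S|/n)`. -/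
theorem stmt_2 (S A : Type) [Fintype S] [Fintype A] [Nonempty S] [Nonempty A]
    [DecidableEq S] [DecidableEq A]
    (ρ : S → ℝ) (πs : S → A → ℝ) (hρ : IsDist ρ) (hπs : IsCondDist πs)
    (n : ℕ) (hn : 0 < n)
    (est : (Fin n → S × A) → S → A → ℝ)
    (hest : ∀ D, IsCondDist (est D))
    (hmle : ∀ D s a, 0 < cntS D s → est D s a = (cntSA D s a : ℝ) / (cntS D s : ℝ)) :
    ∑ D : Fin n → S × A, wt ρ πs D * condTV ρ (est D) πs ≤
      Real.sqrt ((Fintype.card S * Fintype.card A : ℝ) / (2 * n)) +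
      Real.sqrt ((Fintype.card S : ℝ) / n) := by
  have h_mul_est (D : Fin n → S × A) (s : S) (a : A) :
      (cntS D s : ℝ) * est D s a = cntSA D s a := by
    rcases (cntS D s).eq_zero_or_pos with h | h
    · simp [h, Nat.le_zero.mp (h ▸ cntSA_le_cntS D s a)]
    · rw [hmle D s a h, mul_div_cancel₀ _ (by positivity)]
  refine (sum_wt_mul_condTV_le_sqrt hn hρ hπs hest h_mul_est).trans ?_
  gcongr
  norm_num
end

section
/- There is a universal constant c > 0 with the following property. Let S and A be nonempty finite sets with |A| ≥ 3, and let n be a positive integer with n ≥ |S|(|A|−1)/2 − 1. For every (possibly randomized) learner π̂ that maps the pair (D, R) — where D ∈ (S×A)^n and R = ((s_i, a_i, π*(a_i|s_i)))_{i=1}^n records the teacher probability of each sampled label — to a conditional distribution in Δ(A|S), there exist ρ ∈ Δ(S) and π* ∈ Δ(A|S) such that, when D consists of n i.i.d. samples from ρ×π*, the expected risk satisfies E[ TV(π̂(D,R) ‖ π* | ρ) ] ≥ c·|S||A|/n. -/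
open Finset MeasureTheory

/-!
Give each context `s` one dominant label and `m ≈ (|A| - 1) / 2` pairs of labels, where a hidden bit
per pair decides which of its two labels carries the mass `ε`; the other one has mass `0`. A sample
from a pair reveals its bit, with or without the soft label, but a dataset that misses the pair has
the same probability and the same soft labels under both values of the bit. On such datasets, of
total probability `(1 - ρ(s) ε)ⁿ`, the errors of the learner on the two labels of the pair add up to
at least `ε` on average over the bit. With uniform `ρ` and `ε = |S| / (n + 1)` this probability is
at least `1 / e`, and the average risk over all bits is of order `m ε ≍ |S||A| / n`. The condition
on `n` makes `m ε ≤ 1`.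
-/

open scoped BigOperators

lemma exp_neg_one_le_one_sub_one_div_pow (n : ℕ) :
    Real.exp (-1) ≤ (1 - 1 / ((n : ℝ) + 1)) ^ n := by
  rcases n.eq_zero_or_pos with rfl | hn
  · simp
  have hbase : Real.exp (-(1 / n)) ≤ 1 - 1 / ((n : ℝ) + 1) := by
    rw [Real.exp_neg, show 1 - 1 / ((n : ℝ) + 1) = (1 / (n : ℝ) + 1)⁻¹ by field_simp; ring]
    exact inv_anti₀ (by positivity) (Real.add_one_le_exp _)
  calc Real.exp (-1) = Real.exp (-(1 / n)) ^ n := by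
        rw [← Real.exp_nat_mul]
        congr 1
        field_simp
    _ ≤ _ := by gcongr

lemma half_le_expect_of_le_add_perm {ι : Type*} [Fintype ι] [Nonempty ι] {F : ι → ℝ} {δ : ℝ}
    (σ : Equiv.Perm ι) (h : ∀ i, δ ≤ F i + F (σ i)) : δ / 2 ≤ 𝔼 i, F i := by
  have hσ : 𝔼 i, F (σ i) = 𝔼 i, F i := Fintype.expect_equiv σ _ _ fun _ => rfl
  have hδ : δ ≤ 𝔼 i, (F i + F (σ i)) := le_expect univ_nonempty fun i _ => h i
  rw [expect_add_distrib, hσ] at hδ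
  linarith

lemma exists_le_integral_of_le_expect {ι Ω : Type*} [Fintype ι] [Nonempty ι] [MeasurableSpace Ω]
    {μ : Measure Ω} [IsProbabilityMeasure μ] {F : ι → Ω → ℝ} {c : ℝ}
    (hF : ∀ i, Integrable (F i) μ) (h : ∀ ω, c ≤ 𝔼 i, F i ω) : ∃ i, c ≤ ∫ ω, F i ω ∂μ := by
  simp only [Fintype.expect_eq_sum_div_card] at h
  have hc : c ≤ 𝔼 i, ∫ ω, F i ω ∂μ := by
    calc c = ∫ _, c ∂μ := by simp
      _ ≤ ∫ ω, (∑ i, F i ω) / Fintype.card ι ∂μ :=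
          integral_mono (integrable_const c)
            ((integrable_finsetSum _ fun i _ => hF i).div_const _) h
      _ = 𝔼 i, ∫ ω, F i ω ∂μ := by
          rw [integral_div, integral_finsetSum _ fun i _ => hF i, Fintype.expect_eq_sum_div_card]
  obtain ⟨i, -, hi⟩ := exists_le_of_le_expect univ_nonempty hc
  exact ⟨i, hi⟩

lemma sum_comp_embedding_le {ι κ : Type*} [Fintype ι] [Fintype κ] (e : ι ↪ κ) {g : κ → ℝ}
    (hg : ∀ k, 0 ≤ g k) : ∑ i, g (e i) ≤ ∑ k, g k :=
  (sum_map univ e g).symm.trans_le (sum_le_univ_sum_of_nonneg hg)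

/-- The permutation of bit strings that flips the bit at position `k`. It pairs up the hypotheses
that differ only in that bit. -/
def flipBit {K : Type*} [DecidableEq K] (k : K) : Equiv.Perm (K → Bool) :=
  Function.Involutive.toPerm (fun b => Function.update b k (!b k)) fun b => by simp

lemma flipBit_apply_self {K : Type*} [DecidableEq K] (k : K) (b : K → Bool) :
    flipBit k b k = !b k :=
  Function.update_self ..

lemma flipBit_apply_of_ne {K : Type*} [DecidableEq K] {k l : K} (h : l ≠ k) (b : K → Bool) :
    flipBit k b l = b l :=
  Function.update_of_ne h ..

lemma IsDist.le_one {A : Type} [Fintype A] {p : A → ℝ} (hp : IsDist p) (a : A) : p a ≤ 1 :=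
  hp.2 ▸ single_le_sum (fun a _ => hp.1 a) (mem_univ a)

lemma isDist_uniform {S : Type} [Fintype S] [Nonempty S] :
    IsDist fun _ : S => 1 / (Fintype.card S : ℝ) :=
  ⟨fun _ => by positivity, by simp⟩

section Risk

variable {S A : Type} {n : ℕ}

/-- The soft labels `R` of the dataset `D` under the teacher `π`: the probabilities that `π`
assigns to the sampled labels. -/
def softLabels (π : S → A → ℝ) (D : Fin n → S × A) : Fin n → ℝ :=
  fun i => π (D i).1 (D i).2

variable [Fintype S] [Fintype A] {ρ : S → ℝ} {π π' : S → A → ℝ}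

/-- The expected risk of a deterministic learner `est` against the teacher `π`. Improper
learners, whose outputs are arbitrary functions, are allowed. -/
noncomputable def risk (ρ : S → ℝ) (π : S → A → ℝ)
    (est : (Fin n → S × A) → (Fin n → ℝ) → S → A → ℝ) : ℝ :=
  ∑ D, wt ρ π D * condTV ρ (est D (softLabels π D)) π

/-- The expected absolute error of the deterministic learner `est` at the single entry `π(a|s)`. -/
noncomputable def labelRisk (ρ : S → ℝ) (π : S → A → ℝ)
    (est : (Fin n → S × A) → (Fin n → ℝ) → S → A → ℝ) (s : S) (a : A) : ℝ :=
  ∑ D, wt ρ π D * |est D (softLabels π D) s a - π s a|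

lemma wt_nonneg (hρ : IsDist ρ) (hπ : IsCondDist π) (D : Fin n → S × A) : 0 ≤ wt ρ π D :=
  prod_nonneg fun _ _ => mul_nonneg (hρ.1 _) ((hπ _).1 _)

lemma labelRisk_nonneg (hρ : IsDist ρ) (hπ : IsCondDist π)
    (est : (Fin n → S × A) → (Fin n → ℝ) → S → A → ℝ) (s : S) (a : A) :
    0 ≤ labelRisk ρ π est s a :=
  sum_nonneg fun D _ => mul_nonneg (wt_nonneg hρ hπ D) (abs_nonneg _)

lemma risk_eq_sum_labelRisk (ρ : S → ℝ) (π : S → A → ℝ)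
    (est : (Fin n → S × A) → (Fin n → ℝ) → S → A → ℝ) :
    risk ρ π est = ∑ s, ρ s * (1 / 2 * ∑ a, labelRisk ρ π est s a) := by
  simp only [risk, condTV, labelRisk, mul_sum]
  rw [sum_comm]
  refine sum_congr rfl fun s _ => ?_
  rw [sum_comm]
  exact sum_congr rfl fun a _ => sum_congr rfl fun D _ => by ring

lemma sum_wt_piFinset_compl [DecidableEq (S × A)] (hρ : IsDist ρ) (hπ : IsCondDist π)
    (T : Finset (S × A)) :
    ∑ D ∈ Fintype.piFinset (fun _ : Fin n => Tᶜ), wt ρ π D =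
      (1 - ∑ z ∈ T, ρ z.1 * π z.1 z.2) ^ n := by
  have htotal : ∑ z : S × A, ρ z.1 * π z.1 z.2 = 1 := by
    simp only [Fintype.sum_prod_type, ← mul_sum, (hπ _).2, mul_one, hρ.2]
  have hcompl : ∑ z ∈ Tᶜ, ρ z.1 * π z.1 z.2 = 1 - ∑ z ∈ T, ρ z.1 * π z.1 z.2 := by
    rw [← htotal, ← sum_compl_add_sum T, add_sub_cancel_right]
  simp only [wt]
  rw [sum_prod_piFinset Tᶜ fun _ z => ρ z.1 * π z.1 z.2, prod_const, card_univ, Fintype.card_fin,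
    hcompl]

/-- Le Cam's two-point method: a dataset avoiding `T` cannot tell `π` from `π'`. -/
lemma dist_mul_pow_le_sum_wt_add_sum_wt {V : Type*} [PseudoMetricSpace V] (hρ : IsDist ρ)
    (hπ : IsCondDist π) (hπ' : IsCondDist π') {T : Finset (S × A)}
    (hT : ∀ z ∉ T, π' z.1 z.2 = π z.1 z.2)
    (est : (Fin n → S × A) → (Fin n → ℝ) → V) (v v' : V) :
    dist v v' * (1 - ∑ z ∈ T, ρ z.1 * π z.1 z.2) ^ n ≤
      ∑ D, wt ρ π D * dist (est D (softLabels π D)) v +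
        ∑ D, wt ρ π' D * dist (est D (softLabels π' D)) v' := by
  classical
  rw [← sum_wt_piFinset_compl hρ hπ, mul_sum, ← sum_add_distrib]
  refine (sum_le_sum fun D hD => ?_).trans
    (sum_le_sum_of_subset_of_nonneg (subset_univ _) fun D _ _ => ?_)
  · have hagree (i : Fin n) : π' (D i).1 (D i).2 = π (D i).1 (D i).2 :=
      hT _ (mem_compl.1 (Fintype.mem_piFinset.1 hD i))
    have hwt : wt ρ π' D = wt ρ π D := by simp only [wt, hagree]
    have hsoft : softLabels π' D = softLabels π D := funext hagree
    rw [hwt, hsoft, ← mul_add, mul_comm]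
    exact mul_le_mul_of_nonneg_left (dist_triangle_left ..) (wt_nonneg hρ hπ D)
  · exact add_nonneg (mul_nonneg (wt_nonneg hρ hπ D) dist_nonneg)
      (mul_nonneg (wt_nonneg hρ hπ' D) dist_nonneg)

end Risk

section RandomizedLearner

variable {S A : Type} {Ω : Type*} [Fintype A] [MeasurableSpace Ω] {μ : Measure Ω}
  [IsFiniteMeasure μ]

lemma integrable_apply_of_isCondDist {π : Ω → S → A → ℝ} (hmeas : Measurable π)
    (hdist : ∀ ω, IsCondDist (π ω)) (s : S) (a : A) : Integrable (fun ω => π ω s a) μ := by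
  have hmeas_apply : Measurable fun ω => π ω s a := by fun_prop
  refine .of_bound hmeas_apply.aestronglyMeasurable 1 (.of_forall fun ω => ?_)
  rw [Real.norm_of_nonneg ((hdist ω s).1 a)]
  exact (hdist ω s).le_one a

variable [Fintype S] {n : ℕ}

lemma integrable_condTV {π : Ω → S → A → ℝ} (hπ : ∀ s a, Integrable (fun ω => π ω s a) μ)
    (ρ : S → ℝ) (π' : S → A → ℝ) : Integrable (fun ω => condTV ρ (π ω) π') μ :=
  integrable_finsetSum _ fun s _ => ((integrable_finsetSum _ fun a _ =>
    ((hπ s a).sub (integrable_const _)).abs).const_mul _).const_mul _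

variable {est : (Fin n → S × A) → (Fin n → ℝ) → Ω → S → A → ℝ}

lemma integrable_risk (hest : ∀ D R s a, Integrable (fun ω => est D R ω s a) μ)
    (ρ : S → ℝ) (π : S → A → ℝ) :
    Integrable (fun ω => risk ρ π fun D R => est D R ω) μ :=
  integrable_finsetSum _ fun D _ => (integrable_condTV (hest D _) ρ π).const_mul _

lemma integral_risk (hest : ∀ D R s a, Integrable (fun ω => est D R ω s a) μ)
    (ρ : S → ℝ) (π : S → A → ℝ) :
    ∫ ω, risk ρ π (fun D R => est D R ω) ∂μ =
      ∑ D, wt ρ π D * ∫ ω, condTV ρ (est D (softLabels π D) ω) π ∂μ := by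
  simp only [risk]
  rw [integral_finsetSum _ fun D _ => (integrable_condTV (hest D _) ρ π).const_mul _]
  simp only [integral_const_mul]

end RandomizedLearner

section PairedTeacher

variable {S A : Type} {J : Type*} [Fintype J] {ε : ℝ} (f : Option (J × Bool) ↪ A)

/-- The hard teachers of the lower bound, indexed by bit strings `b`. The embedding `f` singles out
a dominant label `f none` and pairs of labels `f (some (j, true))`, `f (some (j, false))`. In
context `s`, the bit `b (s, j)` selects the label of the `j`-th pair that has mass `ε`; the dominant
label takes the remaining mass and all other labels have mass `0`. -/
noncomputable def pairedTeacher (ε : ℝ) (b : S × J → Bool) (s : S) : A → ℝ :=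
  Function.extend f
    (fun o => o.elim (1 - Fintype.card J * ε) fun p => if b (s, p.1) = p.2 then ε else 0) 0

lemma pairedTeacher_none (b : S × J → Bool) (s : S) :
    pairedTeacher f ε b s (f none) = 1 - Fintype.card J * ε :=
  f.injective.extend_apply ..

lemma pairedTeacher_some (b : S × J → Bool) (s : S) (j : J) (β : Bool) :
    pairedTeacher f ε b s (f (some (j, β))) = if b (s, j) = β then ε else 0 :=
  f.injective.extend_apply ..

lemma pairedTeacher_of_notMem_range (b : S × J → Bool) (s : S) {a : A} (ha : a ∉ Set.range f) :
    pairedTeacher f ε b s a = 0 :=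
  Function.extend_apply' _ _ _ ha

lemma isCondDist_pairedTeacher [Fintype A] (hε : 0 ≤ ε) (hJ : Fintype.card J * ε ≤ 1)
    (b : S × J → Bool) : IsCondDist (pairedTeacher f ε b) := by
  refine fun s => ⟨fun a => ?_, ?_⟩
  · by_cases ha : a ∈ Set.range f
    · obtain ⟨_ | ⟨j, β⟩, rfl⟩ := ha
      · rw [pairedTeacher_none]
        linarith
      · rw [pairedTeacher_some]
        positivity
    · exact (pairedTeacher_of_notMem_range f b s ha).ge
  · rw [← Fintype.sum_of_injective f f.injective (fun o => pairedTeacher f ε b s (f o)) _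
      (fun a ha => pairedTeacher_of_notMem_range f b s ha) fun _ => rfl]
    simp [Fintype.sum_option, Fintype.sum_prod_type, pairedTeacher_none, pairedTeacher_some]

variable [DecidableEq S] [DecidableEq J]

lemma pairedTeacher_flipBit_of_ne (b : S × J → Bool) {s t : S} {j : J} {a : A}
    (h : ∀ β, (t, a) ≠ (s, f (some (j, β)))) :
    pairedTeacher f ε (flipBit (s, j) b) t a = pairedTeacher f ε b t a := by
  by_cases ha : a ∈ Set.range f
  · obtain ⟨_ | ⟨i, β⟩, rfl⟩ := ha
    · simp only [pairedTeacher_none]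
    · have hne : (t, i) ≠ (s, j) := fun hij => h β (by simp_all)
      rw [pairedTeacher_some, pairedTeacher_some, flipBit_apply_of_ne hne]
  · simp only [pairedTeacher_of_notMem_range f _ t ha]

lemma dist_pairedTeacher_flipBit (hε : 0 ≤ ε) (b : S × J → Bool) (s : S) (j : J) (β : Bool) :
    dist (pairedTeacher f ε b s (f (some (j, β))))
      (pairedTeacher f ε (flipBit (s, j) b) s (f (some (j, β)))) = ε := by
  rw [pairedTeacher_some, pairedTeacher_some, flipBit_apply_self]
  cases b (s, j) <;> cases β <;> simp [abs_of_nonneg hε]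

variable [Fintype S] [Fintype A] {n : ℕ} {ρ : S → ℝ}

lemma le_labelRisk_add_labelRisk_flipBit (hε : 0 ≤ ε) (hJ : Fintype.card J * ε ≤ 1)
    (hρ : IsDist ρ) (est : (Fin n → S × A) → (Fin n → ℝ) → S → A → ℝ)
    (s : S) (j : J) (β : Bool) (b : S × J → Bool) :
    ε * (1 - ρ s * ε) ^ n ≤
      labelRisk ρ (pairedTeacher f ε b) est s (f (some (j, β))) +
        labelRisk ρ (pairedTeacher f ε (flipBit (s, j) b)) est s (f (some (j, β))) := by
  let pairEmb : Bool ↪ S × A := ⟨fun γ => (s, f (some (j, γ))), fun γ γ' h => by simpa using h⟩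
  have hmass : ∑ z ∈ univ.map pairEmb, ρ z.1 * pairedTeacher f ε b z.1 z.2 = ρ s * ε := by
    have hpairEmb (γ : Bool) : pairEmb γ = (s, f (some (j, γ))) := rfl
    simp [hpairEmb, pairedTeacher_some]
  have htwo_point := dist_mul_pow_le_sum_wt_add_sum_wt hρ (isCondDist_pairedTeacher f hε hJ b)
    (isCondDist_pairedTeacher f hε hJ (flipBit (s, j) b)) (T := univ.map pairEmb)
    (fun z hz => pairedTeacher_flipBit_of_ne f b fun γ hγ =>
      hz (mem_map.2 ⟨γ, mem_univ γ, hγ.symm⟩))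
    (fun D R => est D R s (f (some (j, β)))) (pairedTeacher f ε b s (f (some (j, β))))
    (pairedTeacher f ε (flipBit (s, j) b) s (f (some (j, β))))
  rwa [hmass, dist_pairedTeacher_flipBit f hε] at htwo_point

/-- Assouad's method: the uniform prior on `b` makes the bits independent fair coins. -/
lemma le_expect_risk_pairedTeacher (hε : 0 ≤ ε) (hJ : Fintype.card J * ε ≤ 1) (hρ : IsDist ρ)
    (est : (Fin n → S × A) → (Fin n → ℝ) → S → A → ℝ) :
    ∑ s, ρ s * (1 / 2 * (Fintype.card J * (ε * (1 - ρ s * ε) ^ n))) ≤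
      𝔼 b : S × J → Bool, risk ρ (pairedTeacher f ε b) est := by
  let pairRisk (b : S × J → Bool) (s : S) : ℝ :=
    ∑ p : J × Bool, labelRisk ρ (pairedTeacher f ε b) est s (f (some p))
  have hpair (s : S) : Fintype.card J * (ε * (1 - ρ s * ε) ^ n) ≤ 𝔼 b, pairRisk b s := by
    calc Fintype.card J * (ε * (1 - ρ s * ε) ^ n)
        = ∑ _p : J × Bool, ε * (1 - ρ s * ε) ^ n / 2 := by
          simp only [sum_const, card_univ, Fintype.card_prod, Fintype.card_bool, nsmul_eq_mul,
            Nat.cast_mul]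
          ring
      _ ≤ ∑ p : J × Bool, 𝔼 b, labelRisk ρ (pairedTeacher f ε b) est s (f (some p)) :=
          sum_le_sum fun p _ => half_le_expect_of_le_add_perm (flipBit (s, p.1))
            (le_labelRisk_add_labelRisk_flipBit f hε hJ hρ est s p.1 p.2)
      _ = 𝔼 b, pairRisk b s := (expect_sum_comm ..).symm
  have hrisk (b : S × J → Bool) :
      ∑ s, ρ s * (1 / 2 * pairRisk b s) ≤ risk ρ (pairedTeacher f ε b) est := by
    rw [risk_eq_sum_labelRisk]
    refine sum_le_sum fun s _ => mul_le_mul_of_nonneg_left ?_ (hρ.1 s)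
    refine mul_le_mul_of_nonneg_left ?_ one_half_pos.le
    exact sum_comp_embedding_le (Function.Embedding.some.trans f)
      (labelRisk_nonneg hρ (isCondDist_pairedTeacher f hε hJ b) est s)
  calc ∑ s, ρ s * (1 / 2 * (Fintype.card J * (ε * (1 - ρ s * ε) ^ n)))
      ≤ ∑ s, ρ s * (1 / 2 * 𝔼 b, pairRisk b s) := by
        gcongr with s
        · exact hρ.1 s
        · exact hpair s
    _ = 𝔼 b, ∑ s, ρ s * (1 / 2 * pairRisk b s) := by simp only [expect_sum_comm, mul_expect]
    _ ≤ 𝔼 b, risk ρ (pairedTeacher f ε b) est := expect_le_expect fun b _ => hrisk b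

end PairedTeacher

section MinimaxBound

variable {S A : Type} {J Ω : Type*} [Fintype S] [Fintype A] [Fintype J] [MeasurableSpace Ω]
  {μ : Measure Ω} [IsProbabilityMeasure μ] {n : ℕ}
  {est : (Fin n → S × A) → (Fin n → ℝ) → Ω → S → A → ℝ}

lemma exists_pairedTeacher_le_integral_risk (f : Option (J × Bool) ↪ A) {ε : ℝ} {ρ : S → ℝ}
    (hε : 0 ≤ ε) (hJ : Fintype.card J * ε ≤ 1) (hρ : IsDist ρ)
    (hest : ∀ D R s a, Integrable (fun ω => est D R ω s a) μ) :
    ∃ b : S × J → Bool, ∑ s, ρ s * (1 / 2 * (Fintype.card J * (ε * (1 - ρ s * ε) ^ n))) ≤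
      ∫ ω, risk ρ (pairedTeacher f ε b) (fun D R => est D R ω) ∂μ := by
  classical
  exact exists_le_integral_of_le_expect (fun b => integrable_risk hest ρ (pairedTeacher f ε b))
    fun ω => le_expect_risk_pairedTeacher f hε hJ hρ fun D R => est D R ω

/-- `ε = |S| / (n + 1)` maximizes `ε (1 - ε / |S|)ⁿ`. -/
lemma exists_pairedTeacher_le_integral_risk_uniform [Nonempty S] (f : Option (J × Bool) ↪ A)
    (hJ : (Fintype.card J : ℝ) * (Fintype.card S / (n + 1)) ≤ 1)
    (hest : ∀ D R s a, Integrable (fun ω => est D R ω s a) μ) :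
    ∃ b : S × J → Bool,
      Real.exp (-1) / 2 * (Fintype.card J * (Fintype.card S / (n + 1))) ≤
        ∫ ω, risk (fun _ => 1 / (Fintype.card S : ℝ))
          (pairedTeacher f (Fintype.card S / (n + 1)) b) (fun D R => est D R ω) ∂μ := by
  obtain ⟨b, hb⟩ := exists_pairedTeacher_le_integral_risk f (by positivity) hJ isDist_uniform hest
  refine ⟨b, le_trans ?_ hb⟩
  have hmass : 1 / (Fintype.card S : ℝ) * (Fintype.card S / (n + 1)) = 1 / ((n : ℝ) + 1) := by
    field_simp
  rw [← sum_mul, isDist_uniform.2, one_mul, hmass]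
  calc Real.exp (-1) / 2 * (Fintype.card J * (Fintype.card S / (n + 1)))
      = 1 / 2 * (Fintype.card J * (Fintype.card S / (n + 1) * Real.exp (-1))) := by ring
    _ ≤ _ := by gcongr; exact exp_neg_one_le_one_sub_one_div_pow n

end MinimaxBound

lemma mul_div_le_exp_neg_one_mul_div_succ {N k m n : ℝ} (hN : 0 ≤ N) (hk : k ≤ 4 * m) (hm : 0 ≤ m)
    (hn : 1 ≤ n) : 1 / 48 * (N * k) / n ≤ Real.exp (-1) / 2 * (m * (N / (n + 1))) := by
  have hexp : (1 / 3 : ℝ) ≤ Real.exp (-1) := by linarith [Real.exp_neg_one_gt_d9]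
  calc 1 / 48 * (N * k) / n ≤ 1 / 48 * (N * (4 * m)) / n := by gcongr
    _ = (1 / 3) / 2 * (m * (N / (n + n))) := by field_simp; ring
    _ ≤ Real.exp (-1) / 2 * (m * (N / (n + 1))) := by gcongr

theorem stmt_4_general {S A : Type} [Fintype S] [Fintype A] [Nonempty S]
    (hA : 3 ≤ Fintype.card A) {n : ℕ} (hn : 0 < n)
    (hnS : (Fintype.card S : ℝ) * ((Fintype.card A : ℝ) - 1) / 2 - 1 ≤ n)
    {Ω : Type*} [MeasurableSpace Ω] {μ : Measure Ω} [IsProbabilityMeasure μ]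
    {est : (Fin n → S × A) → (Fin n → ℝ) → Ω → S → A → ℝ}
    (hest : ∀ D R s a, Integrable (fun ω => est D R ω s a) μ) :
    ∃ ρ : S → ℝ, ∃ πs : S → A → ℝ, IsDist ρ ∧ IsCondDist πs ∧
      1 / 48 * (Fintype.card S * Fintype.card A : ℝ) / n ≤
        ∑ D : Fin n → S × A, wt ρ πs D *
          ∫ ω, condTV ρ (est D (fun i => πs (D i).1 (D i).2) ω) πs ∂μ := by
  obtain ⟨m, hmA, hAm⟩ : ∃ m, 2 * m + 1 ≤ Fintype.card A ∧ Fintype.card A ≤ 4 * m :=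
    ⟨(Fintype.card A - 1) / 2, by omega, by omega⟩
  obtain ⟨f⟩ : Nonempty (Option (Fin m × Bool) ↪ A) :=
    Function.Embedding.nonempty_of_card_le (by simpa [mul_comm] using hmA)
  have hmass : (Fintype.card (Fin m) : ℝ) * (Fintype.card S / (n + 1)) ≤ 1 := by
    have hmA' : (2 * m + 1 : ℝ) ≤ Fintype.card A := by exact_mod_cast hmA
    rw [Fintype.card_fin, mul_div_assoc', div_le_one (by positivity)]
    nlinarith [Nat.cast_nonneg (α := ℝ) (Fintype.card S)]
  obtain ⟨b, hb⟩ := exists_pairedTeacher_le_integral_risk_uniform f hmass hest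
  refine ⟨_, _, isDist_uniform, isCondDist_pairedTeacher f (by positivity) hmass b, ?_⟩
  rw [Fintype.card_fin, integral_risk hest] at hb
  exact (mul_div_le_exp_neg_one_mul_div_succ (by positivity) (by exact_mod_cast hAm) (by positivity)
    (by exact_mod_cast hn)).trans hb

/-- minimax lower bound `c·|S||A|/n` for transfer via partial soft
labels: the learner additionally observes `π*(a_i|s_i)` for each sample. -/
theorem stmt_4 :
    ∃ c : ℝ, 0 < c ∧
      ∀ (S A : Type) [Fintype S] [Fintype A] [Nonempty S],
        3 ≤ Fintype.card A →
        ∀ n : ℕ, 0 < n →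
          (Fintype.card S : ℝ) * ((Fintype.card A : ℝ) - 1) / 2 - 1 ≤ n →
          ∀ (Ω : Type) [MeasurableSpace Ω] (μ : Measure Ω) [IsProbabilityMeasure μ]
            (est : (Fin n → S × A) → (Fin n → ℝ) → Ω → S → A → ℝ),
            (∀ D R, Measurable (est D R)) →
            (∀ D R ω, IsCondDist (est D R ω)) →
            ∃ ρ : S → ℝ, ∃ πs : S → A → ℝ,
              IsDist ρ ∧ IsCondDist πs ∧
              c * (Fintype.card S * Fintype.card A : ℝ) / n ≤
                ∑ D : Fin n → S × A, wt ρ πs D *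
                  ∫ ω, condTV ρ (est D (fun i => πs (D i).1 (D i).2) ω) πs ∂μ := by
  exact ⟨1 / 48, by norm_num, fun S A _ _ _ hA n hn hnS Ω _ μ _ est hmeas hdist =>
    stmt_4_general hA hn hnS fun D R => integrable_apply_of_isCondDist (hmeas D R) (hdist D R)⟩
end

section
/- There is a universal constant C > 0 with the following property. Let A be a nonempty finite set (|S| = 1), π* a probability distribution on A, and a_1,…,a_n i.i.d. samples from π*. Let π̂ be any probability distribution on A satisfying π̂(a_i) = π*(a_i) for every i ∈ {1,…,n}. Then for every δ ∈ (0, 1/10], with probability at least 1 − δ, TV(π̂, π*) ≤ C·( |A|/n + (√|A|/n)·log(1/δ) ), where TV(p,q) := (1/2)·Σ_{a∈A} |p(a) − q(a)|. -/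
open Finset

/-- Total variation distance between two pmfs on a finite set. -/
noncomputable def tvDist {A : Type} [Fintype A] (p q : A → ℝ) : ℝ :=
  (1 / 2) * ∑ a, |p a - q a|

/-- Probability of the sample sequence `D` under `n` i.i.d. samples from `π`. -/
noncomputable def wt1 {A : Type} {n : ℕ} (π : A → ℝ) (D : Fin n → A) : ℝ :=
  ∏ i, π (D i)

open scoped Classical

/-!
Fitted and true distribution agree on the labels that were seen, so they can differ only on the set
of unseen labels. Both have total mass one, hence they give the unseen labels the same mass, and
their total variation distance is at most that missing mass. A fixed set `U` of mass larger than `ε`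
is missed by all `n` samples with probability at most `(1 - ε) ^ n ≤ exp (-n ε)`, and there are only
`2 ^ |A|` candidates for the unseen set, so the missing mass exceeds `ε` with probability at most
`2 ^ |A| * exp (-n ε)`.
-/

section TotalVariation

variable {A : Type} [Fintype A] {p q : A → ℝ}

theorem IsDist.sum_compl (hp : IsDist p) (U : Finset A) :
    ∑ a ∈ Uᶜ, p a = 1 - ∑ a ∈ U, p a := by
  rw [← hp.2, ← sum_add_sum_compl U p, add_sub_cancel_left]

theorem IsDist.sum_eq_of_forall_notMem_eq (hp : IsDist p) (hq : IsDist q) {U : Finset A}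
    (hpq : ∀ a ∉ U, p a = q a) : ∑ a ∈ U, p a = ∑ a ∈ U, q a := by
  have hcompl : ∑ a ∈ Uᶜ, p a = ∑ a ∈ Uᶜ, q a :=
    sum_congr rfl fun a ha ↦ hpq a (mem_compl.mp ha)
  linarith [hp.sum_compl U, hq.sum_compl U]

theorem tvDist_le_sum_of_forall_notMem_eq (hp : IsDist p) (hq : IsDist q) {U : Finset A}
    (hpq : ∀ a ∉ U, p a = q a) : tvDist p q ≤ ∑ a ∈ U, q a := by
  have hsupp : ∑ a, |p a - q a| = ∑ a ∈ U, |p a - q a| :=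
    (sum_subset (subset_univ U) fun a _ ha ↦ by rw [hpq a ha, sub_self, abs_zero]).symm
  have habs (a : A) : |p a - q a| ≤ p a + q a := by
    simpa only [abs_of_nonneg (hp.1 a), abs_of_nonneg (hq.1 a)] using abs_sub (p a) (q a)
  calc tvDist p q = (1 / 2) * ∑ a ∈ U, |p a - q a| := by rw [tvDist, hsupp]
    _ ≤ (1 / 2) * ∑ a ∈ U, (p a + q a) := by gcongr with a; exact habs a
    _ = ∑ a ∈ U, q a := by
      rw [sum_add_distrib, hp.sum_eq_of_forall_notMem_eq hq hpq]; ring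

end TotalVariation

section UnseenLabels

variable {ι : Type*} [Fintype ι]

/-- The labels that do not occur in the sample `D`; their total mass under the sampling distribution
is the missing mass of `D`. -/
noncomputable def unseen {A : Type*} [Fintype A] (D : ι → A) : Finset A :=
  (univ.image D)ᶜ

theorem apply_mem_compl_unseen {A : Type*} [Fintype A] (D : ι → A) (i : ι) : D i ∈ (unseen D)ᶜ := by
  simp [unseen]

theorem tvDist_le_sum_unseen {A : Type} [Fintype A] {p q : A → ℝ} (hp : IsDist p)
    (hq : IsDist q) {D : ι → A} (hD : ∀ i, p (D i) = q (D i)) :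
    tvDist p q ≤ ∑ a ∈ unseen D, q a := by
  refine tvDist_le_sum_of_forall_notMem_eq hp hq fun a ha ↦ ?_
  obtain ⟨i, rfl⟩ : ∃ i, D i = a := by simpa [unseen] using ha
  exact hD i

end UnseenLabels

section MissingMass

variable {A : Type} {n : ℕ} {π : A → ℝ}

theorem wt1_nonneg (hπ : ∀ a, 0 ≤ π a) (D : Fin n → A) : 0 ≤ wt1 π D :=
  prod_nonneg fun i _ ↦ hπ (D i)

theorem sum_piFinset_wt1 (π : A → ℝ) (s : Finset A) :
    ∑ D ∈ Fintype.piFinset fun _ : Fin n ↦ s, wt1 π D = (∑ a ∈ s, π a) ^ n :=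
  (sum_pow' s π n).symm

variable [Fintype A]

theorem sum_filter_wt1_mono (hπ : ∀ a, 0 ≤ π a) {P Q : (Fin n → A) → Prop}
    [DecidablePred P] [DecidablePred Q] (hPQ : ∀ D, P D → Q D) :
    ∑ D with P D, wt1 π D ≤ ∑ D with Q D, wt1 π D :=
  sum_le_sum_of_subset_of_nonneg (monotone_filter_right univ fun D _ ↦ hPQ D)
    fun D _ _ ↦ wt1_nonneg hπ D

theorem IsDist.sum_wt1 (hπ : IsDist π) : ∑ D : Fin n → A, wt1 π D = 1 := by
  simpa only [Fintype.piFinset_univ, hπ.2, one_pow] using sum_piFinset_wt1 (n := n) π univ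

theorem sum_wt1_unseen_eq_le (hπ : IsDist π) (U : Finset A) :
    ∑ D : Fin n → A with unseen D = U, wt1 π D ≤ Real.exp (-(n * ∑ a ∈ U, π a)) := by
  have hsub : ({D | unseen D = U} : Finset (Fin n → A)) ⊆ Fintype.piFinset fun _ ↦ Uᶜ := by
    intro D hD
    obtain rfl : unseen D = U := by simpa using hD
    exact Fintype.mem_piFinset.mpr (apply_mem_compl_unseen D)
  calc ∑ D : Fin n → A with unseen D = U, wt1 π D
      ≤ ∑ D ∈ Fintype.piFinset fun _ : Fin n ↦ Uᶜ, wt1 π D :=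
        sum_le_sum_of_subset_of_nonneg hsub fun D _ _ ↦ wt1_nonneg hπ.1 D
    _ = (∑ a ∈ Uᶜ, π a) ^ n := sum_piFinset_wt1 π Uᶜ
    _ ≤ Real.exp (-∑ a ∈ U, π a) ^ n := by
        gcongr
        · exact sum_nonneg fun a _ ↦ hπ.1 a
        · exact (hπ.sum_compl U).trans_le (Real.one_sub_le_exp_neg _)
    _ = Real.exp (-(n * ∑ a ∈ U, π a)) := by rw [← Real.exp_nat_mul, mul_neg]

theorem sum_wt1_lt_sum_unseen_le (hπ : IsDist π) (ε : ℝ) :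
    ∑ D : Fin n → A with ε < ∑ a ∈ unseen D, π a, wt1 π D ≤
      2 ^ Fintype.card A * Real.exp (-(n * ε)) := by
  let heavy : Finset (Finset A) := {U | ε < ∑ a ∈ U, π a}
  have hfiber : ∀ U ∈ heavy,
      ∑ D : Fin n → A with unseen D = U, wt1 π D ≤ Real.exp (-(n * ε)) := by
    intro U hU
    have hεU : ε < ∑ a ∈ U, π a := by simpa [heavy] using hU
    exact (sum_wt1_unseen_eq_le hπ U).trans (by gcongr)
  have hcard : (#heavy : ℝ) ≤ 2 ^ Fintype.card A := by
    exact_mod_cast (card_le_univ heavy).trans_eq Fintype.card_finset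
  calc ∑ D : Fin n → A with ε < ∑ a ∈ unseen D, π a, wt1 π D
      = ∑ U ∈ heavy, ∑ D : Fin n → A with unseen D = U, wt1 π D := by
        rw [sum_fiberwise_eq_sum_filter]
        simp only [heavy, mem_filter_univ]
    _ ≤ #heavy * Real.exp (-(n * ε)) := by
        simpa only [nsmul_eq_mul] using sum_le_card_nsmul heavy _ _ hfiber
    _ ≤ 2 ^ Fintype.card A * Real.exp (-(n * ε)) := by gcongr

theorem one_sub_le_sum_wt1_sum_unseen_le (hπ : IsDist π) (ε : ℝ) :
    1 - 2 ^ Fintype.card A * Real.exp (-(n * ε)) ≤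
      ∑ D : Fin n → A with ∑ a ∈ unseen D, π a ≤ ε, wt1 π D := by
  have hsplit := sum_filter_add_sum_filter_not univ
    (fun D : Fin n → A ↦ ∑ a ∈ unseen D, π a ≤ ε) (wt1 π)
  simp only [not_le, hπ.sum_wt1] at hsplit
  linarith [sum_wt1_lt_sum_unseen_le (n := n) hπ ε]

end MissingMass

theorem two_pow_mul_exp_neg_eq {n δ : ℝ} (hn : n ≠ 0) (hδ : 0 < δ) (k : ℕ) :
    2 ^ k * Real.exp (-(n * ((k * Real.log 2 + Real.log (1 / δ)) / n))) = δ := by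
  have hexponent : -(n * ((k * Real.log 2 + Real.log (1 / δ)) / n)) =
      Real.log δ - k * Real.log 2 := by
    rw [mul_div_cancel₀ _ hn, one_div, Real.log_inv]; ring
  rw [hexponent, Real.exp_sub, Real.exp_log hδ, Real.exp_nat_mul, Real.exp_log two_pos,
    mul_div_cancel₀ _ (by positivity)]

theorem mul_log_two_add_div_le {k n L : ℝ} (hk : 1 ≤ k) (hn : 0 ≤ n) (hL : 0 ≤ L) :
    (k * Real.log 2 + L) / n ≤ k / n + √k / n * L := by
  have hlog : k * Real.log 2 ≤ k :=
    mul_le_of_le_one_right (by positivity) (by linarith [Real.log_two_lt_d9])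
  have hsqrt : L ≤ √k * L := le_mul_of_one_le_left hL (Real.one_le_sqrt.mpr hk)
  calc (k * Real.log 2 + L) / n ≤ (k + √k * L) / n := by gcongr
    _ = k / n + √k / n * L := by ring

/-- Since a single event serves all `p` at once, `p` may depend on the sample. -/
theorem stmt_11_general {A : Type} [Fintype A] {π : A → ℝ} (hπ : IsDist π) {n : ℕ} (hn : 0 < n)
    {δ : ℝ} (hδ : 0 < δ) :
    1 - δ ≤ ∑ D : Fin n → A with ∀ p, IsDist p → (∀ i, p (D i) = π (D i)) →
      tvDist p π ≤ (Fintype.card A * Real.log 2 + Real.log (1 / δ)) / n, wt1 π D := by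
  have hmissing := one_sub_le_sum_wt1_sum_unseen_le (n := n) hπ
    ((Fintype.card A * Real.log 2 + Real.log (1 / δ)) / n)
  rw [two_pow_mul_exp_neg_eq (Nat.cast_ne_zero.mpr hn.ne') hδ] at hmissing
  exact hmissing.trans <| sum_filter_wt1_mono hπ.1 fun D hD p hp hpD ↦
    (tvDist_le_sum_unseen hp hπ hpD).trans hD

/-- high-probability upper bound for any empirical squared error
logit loss minimizer in the single-input case `|S| = 1`. -/
theorem stmt_11 :
    ∃ C : ℝ, 0 < C ∧
      ∀ (A : Type) [Fintype A] [Nonempty A]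
        (πs : A → ℝ), IsDist πs →
        ∀ (n : ℕ), 0 < n →
        ∀ (est : (Fin n → A) → A → ℝ),
          (∀ D, IsDist (est D)) →
          (∀ D (i : Fin n), est D (D i) = πs (D i)) →
          ∀ δ : ℝ, 0 < δ → δ ≤ 1 / 10 →
            1 - δ ≤
              ∑ D : Fin n → A,
                if tvDist (est D) πs ≤
                    C * ((Fintype.card A : ℝ) / n +
                      Real.sqrt (Fintype.card A : ℝ) / n * Real.log (1 / δ))
                  then wt1 πs D else 0 := by
  refine ⟨1, one_pos, fun A _ _ πs hπ n hn est hest hmatch δ hδ hδ1 ↦ ?_⟩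
  have hcard : (1 : ℝ) ≤ Fintype.card A := by exact_mod_cast Fintype.card_pos
  have hlog : 0 ≤ Real.log (1 / δ) := Real.log_nonneg (one_le_one_div hδ (by linarith))
  have hbound := mul_log_two_add_div_le hcard n.cast_nonneg hlog
  rw [← sum_filter, one_mul]
  exact (stmt_11_general hπ hn hδ).trans <| sum_filter_wt1_mono hπ.1 fun D hD ↦
    (hD (est D) (hest D) (hmatch D)).trans hbound
end

section
/- There is a universal constant C > 0 with the following property. Let S and A be nonempty finite sets, ρ ∈ Δ(S), π* ∈ Δ(A|S), and let D = ((s_1,a_1),…,(s_n,a_n)) be n i.i.d. samples from ρ×π*. Let π̂ ∈ Δ(A|S) be any conditional distribution satisfying π̂(a_i|s_i) = π*(a_i|s_i) for every i ∈ {1,…,n}. Then the expected risk satisfies E[ TV(π̂ ‖ π* | ρ) ] ≤ C·|S||A|/n. -/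
open Finset

/-!
Two distributions on `A` have the same total mass, so their total variation distance is the total
amount by which the second exceeds the first. A learner that agrees with the teacher on the sample
can fall short of it only at unseen pairs, so its total variation is at most the missing mass: the
teacher probability of the pairs that do not occur in the sample. A pair of probability `p` is
unseen with probability `(1 - p) ^ n`, so it contributes `p * (1 - p) ^ n ≤ 1 / (n + 1)` to the
expected missing mass.
-/

theorem mul_one_sub_pow_le {K : Type*} [Field K] [LinearOrder K] [IsStrictOrderedRing K] {p : K}
    (hp₀ : 0 ≤ p) (hp₁ : p ≤ 1) (n : ℕ) : p * (1 - p) ^ n ≤ 1 / (n + 1) := by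
  have hq : 0 ≤ 1 - p := sub_nonneg.2 hp₁
  have bernoulli : 1 + n * p ≤ (1 + p) ^ n := one_add_mul_le_pow (by linarith) n
  rw [le_div_iff₀ (by positivity)]
  calc p * (1 - p) ^ n * (n + 1) = (p + n * p) * (1 - p) ^ n := by ring
    _ ≤ (1 + n * p) * (1 - p) ^ n :=
        mul_le_mul_of_nonneg_right (add_le_add_left hp₁ _) (pow_nonneg hq n)
    _ ≤ (1 + p) ^ n * (1 - p) ^ n := mul_le_mul_of_nonneg_right bernoulli (pow_nonneg hq n)
    _ = (1 - p ^ 2) ^ n := by rw [← mul_pow]; ring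
    _ ≤ 1 := pow_le_one₀ (sub_nonneg.2 (pow_le_one₀ hp₀ hp₁)) (sub_le_self 1 (sq_nonneg p))

theorem half_sum_abs_sub_eq_sum_posPart {X K : Type*} [Fintype X] [Field K] [LinearOrder K]
    [IsStrictOrderedRing K] {f g : X → K} (h : ∑ x, f x = ∑ x, g x) :
    1 / 2 * ∑ x, |f x - g x| = ∑ x, (g x - f x)⁺ := by
  have sum_sub_eq_zero : ∑ x, (g x - f x) = 0 := by rw [sum_sub_distrib, h, sub_self]
  have two_mul_sum : ∑ x, |f x - g x| = 2 * ∑ x, (g x - f x)⁺ := calc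
    ∑ x, |f x - g x| = ∑ x, (|g x - f x| + (g x - f x)) := by
      rw [sum_add_distrib, sum_sub_eq_zero, add_zero]
      simp only [abs_sub_comm]
    _ = 2 * ∑ x, (g x - f x)⁺ := by
      simp only [abs_add_eq_two_nsmul_posPart, nsmul_eq_mul, Nat.cast_ofNat, mul_sum]
  rw [two_mul_sum]
  ring

theorem sum_piFinset_compl_singleton_prod {ι X R : Type*} [Fintype ι] [DecidableEq ι] [Fintype X]
    [DecidableEq X] [CommRing R] {p : X → R} (hp : ∑ x, p x = 1) (x : X) :
    ∑ D ∈ Fintype.piFinset fun _ : ι => {x}ᶜ, ∏ i, p (D i) = (1 - p x) ^ Fintype.card ι := by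
  have sum_compl : ∑ y ∈ {x}ᶜ, p y = 1 - p x := by
    rw [← hp, Fintype.sum_eq_add_sum_compl x, add_sub_cancel_left]
  rw [sum_prod_piFinset _ fun _ => p, sum_compl, prod_const, card_univ]

/-- The mass that the weights `p` put on the points of `X` that do not occur in the sample `D`
(the quantity estimated by Good and Turing). -/
def missingMass {ι X R : Type*} [Fintype ι] [Fintype X] [DecidableEq X] [AddCommMonoid R]
    (p : X → R) (D : ι → X) : R :=
  ∑ x ∈ (univ.image D)ᶜ, p x

theorem sum_prod_mul_missingMass {ι X R : Type*} [Fintype ι] [DecidableEq ι] [Fintype X]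
    [DecidableEq X] [CommRing R] {p : X → R} (hp : ∑ x, p x = 1) :
    ∑ D : ι → X, (∏ i, p (D i)) * missingMass p D = ∑ x, p x * (1 - p x) ^ Fintype.card ι := calc
  ∑ D : ι → X, (∏ i, p (D i)) * missingMass p D
      = ∑ D : ι → X, ∑ x ∈ (univ.image D)ᶜ, p x * ∏ i, p (D i) := by
    simp only [missingMass, mul_comm (∏ _, _), sum_mul]
  _ = ∑ x, ∑ D ∈ Fintype.piFinset fun _ : ι => {x}ᶜ, p x * ∏ i, p (D i) :=
    sum_comm' (by simp)
  _ = ∑ x, p x * (1 - p x) ^ Fintype.card ι := by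
    simp only [← mul_sum, sum_piFinset_compl_singleton_prod hp]

theorem sum_prod_mul_missingMass_le {ι : Type*} {X : Type} [Fintype ι] [DecidableEq ι] [Fintype X]
    [DecidableEq X] {p : X → ℝ} (hp : IsDist p) :
    ∑ D : ι → X, (∏ i, p (D i)) * missingMass p D ≤ Fintype.card X / (Fintype.card ι + 1) := by
  have p_le_one (x : X) : p x ≤ 1 :=
    hp.2 ▸ single_le_sum (fun y _ => hp.1 y) (mem_univ x)
  calc ∑ D : ι → X, (∏ i, p (D i)) * missingMass p D
      = ∑ x, p x * (1 - p x) ^ Fintype.card ι := sum_prod_mul_missingMass hp.2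
    _ ≤ ∑ _x : X, 1 / ((Fintype.card ι : ℝ) + 1) :=
        sum_le_sum fun x _ => mul_one_sub_pow_le (hp.1 x) (p_le_one x) _
    _ = Fintype.card X / (Fintype.card ι + 1) := by
        rw [sum_const, card_univ, nsmul_eq_mul, mul_one_div]

/-- The joint distribution `ρ × π` on `S × A` of an input drawn from `ρ` and a label drawn from the
conditional distribution `π`. -/
def jointDist {S A : Type*} (ρ : S → ℝ) (π : S → A → ℝ) (x : S × A) : ℝ :=
  ρ x.1 * π x.1 x.2

section Risk

variable {S A : Type} [Fintype S] [Fintype A] {ρ : S → ℝ} {π π' : S → A → ℝ}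

theorem isDist_jointDist (hρ : IsDist ρ) (hπ : IsCondDist π) : IsDist (jointDist ρ π) := by
  refine ⟨fun x => mul_nonneg (hρ.1 _) ((hπ _).1 _), ?_⟩
  simp only [jointDist, Fintype.sum_prod_type, ← mul_sum, (hπ _).2, mul_one, hρ.2]

theorem condTV_eq_sum_mul_posPart (hπ : IsCondDist π) (hπ' : IsCondDist π') :
    condTV ρ π π' = ∑ x : S × A, ρ x.1 * (π' x.1 x.2 - π x.1 x.2)⁺ := by
  have half_sum_abs (s : S) :=
    half_sum_abs_sub_eq_sum_posPart ((hπ s).2.trans (hπ' s).2.symm)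
  simp only [condTV, half_sum_abs, mul_sum, Fintype.sum_prod_type]

theorem condTV_le_missingMass [DecidableEq S] [DecidableEq A] (hρ : ∀ s, 0 ≤ ρ s)
    (hπ : IsCondDist π) (hπ' : IsCondDist π') {ι : Type*} [Fintype ι] {D : ι → S × A}
    (hD : ∀ i, π' (D i).1 (D i).2 ≤ π (D i).1 (D i).2) :
    condTV ρ π π' ≤ missingMass (jointDist ρ π') D := by
  have no_deficit_of_seen : ∀ x ∈ univ.image D, (π' x.1 x.2 - π x.1 x.2)⁺ = 0 :=
    forall_mem_image.2 fun i _ => posPart_eq_zero.2 (sub_nonpos.2 (hD i))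
  have deficit_le (x : S × A) : (π' x.1 x.2 - π x.1 x.2)⁺ ≤ π' x.1 x.2 :=
    sup_le (sub_le_self _ ((hπ _).1 _)) ((hπ' _).1 _)
  calc condTV ρ π π' = ∑ x : S × A, ρ x.1 * (π' x.1 x.2 - π x.1 x.2)⁺ :=
        condTV_eq_sum_mul_posPart hπ hπ'
    _ = ∑ x ∈ (univ.image D)ᶜ, ρ x.1 * (π' x.1 x.2 - π x.1 x.2)⁺ := by
        refine (sum_subset (subset_univ _) fun x _ hx => ?_).symm
        rw [no_deficit_of_seen x (notMem_compl.1 hx), mul_zero]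
    _ ≤ missingMass (jointDist ρ π') D :=
        sum_le_sum fun x _ => mul_le_mul_of_nonneg_left (deficit_le x) (hρ _)

theorem stmt_12_general (hρ : IsDist ρ) (hπ : IsCondDist π) {n : ℕ}
    {est : (Fin n → S × A) → S → A → ℝ} (hest : ∀ D, IsCondDist (est D))
    (hle : ∀ D (i : Fin n), π (D i).1 (D i).2 ≤ est D (D i).1 (D i).2) :
    ∑ D : Fin n → S × A, wt ρ π D * condTV ρ (est D) π ≤
      (Fintype.card S * Fintype.card A : ℝ) / (n + 1) := by
  classical
  have joint := isDist_jointDist hρ hπ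
  calc ∑ D : Fin n → S × A, wt ρ π D * condTV ρ (est D) π
      ≤ ∑ D : Fin n → S × A, wt ρ π D * missingMass (jointDist ρ π) D :=
        sum_le_sum fun D _ => mul_le_mul_of_nonneg_left
          (condTV_le_missingMass hρ.1 (hest D) hπ (hle D)) (prod_nonneg fun i _ => joint.1 (D i))
    _ ≤ Fintype.card (S × A) / (Fintype.card (Fin n) + 1) := sum_prod_mul_missingMass_le joint
    _ = (Fintype.card S * Fintype.card A : ℝ) / (n + 1) := by
        rw [Fintype.card_prod, Fintype.card_fin, Nat.cast_mul]

end Risk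

/-- expected-risk upper bound `C·|S||A|/n` for any empirical squared
error logit loss minimizer (a learner matching the teacher probability on every
sampled pair). -/
theorem stmt_12 :
    ∃ C : ℝ, 0 < C ∧
      ∀ (S A : Type) [Fintype S] [Fintype A] [Nonempty S] [Nonempty A]
        (ρ : S → ℝ) (πs : S → A → ℝ), IsDist ρ → IsCondDist πs →
        ∀ (n : ℕ), 0 < n →
        ∀ (est : (Fin n → S × A) → S → A → ℝ),
          (∀ D, IsCondDist (est D)) →
          (∀ D (i : Fin n), est D (D i).1 (D i).2 = πs (D i).1 (D i).2) →
          ∑ D : Fin n → S × A, wt ρ πs D * condTV ρ (est D) πs ≤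
            C * (Fintype.card S * Fintype.card A : ℝ) / n := by
  refine ⟨1, one_pos, fun S A _ _ _ _ ρ πs hρ hπ n hn est hest hmatch => ?_⟩
  have hn' : (0 : ℝ) < n := Nat.cast_pos.2 hn
  rw [one_mul]
  exact (stmt_12_general hρ hπ hest fun D i => (hmatch D i).ge).trans <|
    div_le_div_of_nonneg_left (by positivity) hn' (le_add_of_nonneg_right zero_le_one)
end
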